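/- arXiv:1309.5701 — 3 statements merged into one kernel-verified Lean document; each statement's English description precedes it below -/
import Mathlib

section
/- Let G ∈ ℝ^{r×r} with rank(G) = r, let K ∈ ℝ^{r×ℓ} be a real matrix (not necessarily nonnegative) whose columns k_1, …, k_ℓ satisfy ‖k_i‖_2 < 1, and let B = GK. For the columns g_j of G and b_i of B, let S = {±g_1, …, ±g_r, ±b_1, …, ±b_ℓ}. Then L* = (GGᵀ)⁻¹ is an optimal solution of the origin-centered MVEE problem Q(S), b_iᵀ L* b_i < 1 for every i = 1, …, ℓ, and the set of active points of Q(S) with respect to L* is exactly {±g_1, …, ±g_r}. -/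
open Matrix

noncomputable def euclNorm {n : ℕ} (v : Fin n → ℝ) : ℝ := Real.sqrt (∑ i, v i ^ 2)

noncomputable def oneNorm {n : ℕ} (v : Fin n → ℝ) : ℝ := ∑ i, |v i|

noncomputable def specNorm {d m : ℕ} (M : Matrix (Fin d) (Fin m) ℝ) : ℝ :=
  ‖LinearMap.toContinuousLinearMap (Matrix.toEuclideanLin M)‖

noncomputable def sigmaMin {d r : ℕ} (M : Matrix (Fin d) (Fin r) ℝ) : ℝ :=
  sInf ((fun x => euclNorm (M *ᵥ x)) '' {x : Fin r → ℝ | euclNorm x = 1})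

/-!
Put `L* = (G Gᵀ)⁻¹`. The substitution `p = G x` turns the form `pᵀ L* p` into `xᵀ x`, since
`Gᵀ L* G = 1`; it sends the standard basis vectors to the `g_j` and the `k_i`, which lie strictly
inside the unit ball, to the `b_i`. Hence `L*` is feasible and exactly the `±g_j` are active.
If `L` is feasible, then `M = Gᵀ L G` is positive semidefinite with diagonal entries
`g_jᵀ L g_j ≤ 1`. Applying `t ≤ exp (t - 1)` to its eigenvalues gives
`det M ≤ exp (tr M - r) ≤ 1 = det (Gᵀ L* G)`, and dividing by `(det G)²` gives `det L ≤ det L*`.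
-/

/-- The symmetric point set `{±v i}` of a family `v`, from which MVEE instances are assembled. -/
def signedRange {ι E : Type*} [Neg E] (v : ι → E) : Set E := {x | ∃ i, x = v i ∨ x = -v i}

theorem forall_mem_signedRange_dotProduct_mulVec_iff {ι n R : Type*} [Fintype n]
    [NonUnitalNonAssocRing R] {v : ι → n → R} {L : Matrix n n R} {P : R → Prop} :
    (∀ p ∈ signedRange v, P (p ⬝ᵥ (L *ᵥ p))) ↔ ∀ i, P (v i ⬝ᵥ (L *ᵥ v i)) := by
  refine ⟨fun h i => h _ ⟨i, .inl rfl⟩, ?_⟩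
  rintro h _ ⟨i, rfl | rfl⟩
  · exact h i
  · rw [mulVec_neg, neg_dotProduct_neg]
    exact h i

section MVEE

variable {n : Type*} [Fintype n] {S T : Set (n → ℝ)} {L : Matrix n n ℝ}

/-- Feasibility of `L` for the origin-centered MVEE problem `Q(S)`: the ellipsoid
`{x | xᵀ L x ≤ 1}` contains `S`. -/
def IsMVEEFeasible (S : Set (n → ℝ)) (L : Matrix n n ℝ) : Prop :=
  L.PosDef ∧ ∀ p ∈ S, p ⬝ᵥ (L *ᵥ p) ≤ 1

/-- Optimality of `L` for `Q(S)`. On positive definite matrices, minimizing `-log det` amounts to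
maximizing `det`, and the latter is how optimality is expressed here. -/
def IsMVEEOptimal [DecidableEq n] (S : Set (n → ℝ)) (L : Matrix n n ℝ) : Prop :=
  IsMVEEFeasible S L ∧ ∀ L', IsMVEEFeasible S L' → L'.det ≤ L.det

/-- The active points of `Q(S)` with respect to `L`: the points of `S` on the boundary of the
ellipsoid `{x | xᵀ L x ≤ 1}`. -/
def mveeActivePoints (S : Set (n → ℝ)) (L : Matrix n n ℝ) : Set (n → ℝ) :=
  {p ∈ S | p ⬝ᵥ (L *ᵥ p) = 1}

theorem mveeActivePoints_union_eq_left (hS : ∀ p ∈ S, p ⬝ᵥ (L *ᵥ p) = 1)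
    (hT : ∀ p ∈ T, p ⬝ᵥ (L *ᵥ p) < 1) : mveeActivePoints (S ∪ T) L = S := by
  ext p
  refine ⟨?_, fun hp => ⟨.inl hp, hS p hp⟩⟩
  rintro ⟨hp | hp, hp_eq⟩
  exacts [hp, absurd hp_eq (hT p hp).ne]

end MVEE

section Determinant

variable {n : Type*} [Fintype n] [DecidableEq n] {M : Matrix n n ℝ}

theorem det_le_exp_trace_sub_card (hM : M.PosSemidef) :
    M.det ≤ Real.exp (M.trace - Fintype.card n) := by
  set μ := hM.isHermitian.eigenvalues
  have hdet : M.det = ∏ i, μ i := hM.isHermitian.det_eq_prod_eigenvalues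
  have htrace : M.trace = ∑ i, μ i := hM.isHermitian.trace_eq_sum_eigenvalues
  calc M.det = ∏ i, μ i := hdet
    _ ≤ ∏ i, Real.exp (μ i - 1) :=
        Finset.prod_le_prod (fun i _ => hM.eigenvalues_nonneg i) fun i _ => by
          simpa using Real.add_one_le_exp (μ i - 1)
    _ = Real.exp (∑ i, (μ i - 1)) := (Real.exp_sum _ _).symm
    _ = Real.exp (M.trace - Fintype.card n) := by simp [htrace]

theorem det_le_one_of_diag_le_one (hM : M.PosSemidef) (hdiag : ∀ i, M i i ≤ 1) : M.det ≤ 1 := by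
  have htrace : M.trace ≤ Fintype.card n := by
    simpa [trace] using Finset.sum_le_sum fun i (_ : i ∈ Finset.univ) => hdiag i
  exact (det_le_exp_trace_sub_card hM).trans (Real.exp_le_one_iff.2 (sub_nonpos.2 htrace))

end Determinant

theorem isUnit_of_rank_eq_card {n K : Type*} [Fintype n] [DecidableEq n] [Field K]
    {A : Matrix n n K} (hA : A.rank = Fintype.card n) : IsUnit A := by
  rw [← linearIndependent_cols_iff_isUnit, linearIndependent_iff_card_eq_finrank_span,
    Set.finrank, ← rank_eq_finrank_span_cols, hA]

section Congruence

theorem transpose_mul_mul_apply {m n R : Type*} [Fintype m] [NonUnitalSemiring R]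
    (A : Matrix m n R) (L : Matrix m m R) (i j : n) :
    (Aᵀ * L * A) i j = A.col i ⬝ᵥ (L *ᵥ A.col j) := by
  rw [Matrix.mul_assoc]
  rfl

variable {n R : Type*} [Fintype n] [DecidableEq n] [CommRing R] {G : Matrix n n R}

theorem transpose_mul_inv_mul_transpose_mul (hG : IsUnit G) : Gᵀ * (G * Gᵀ)⁻¹ * G = 1 := by
  have hdet : IsUnit G.det := (isUnit_iff_isUnit_det G).1 hG
  rw [Matrix.mul_inv_rev, mul_nonsing_inv_cancel_left _ _ (isUnit_det_transpose G hdet),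
    nonsing_inv_mul _ hdet]

theorem mulVec_dotProduct_inv_mul_transpose_mulVec (hG : IsUnit G) (x y : n → R) :
    (G *ᵥ x) ⬝ᵥ ((G * Gᵀ)⁻¹ *ᵥ (G *ᵥ y)) = x ⬝ᵥ y := by
  rw [dotProduct_comm, ← dotProduct_transpose_mulVec, mulVec_mulVec, mulVec_mulVec,
    transpose_mul_inv_mul_transpose_mul hG, one_mulVec]

end Congruence

section Optimality

variable {n : Type*} [Fintype n] [DecidableEq n] {G L : Matrix n n ℝ}

theorem posDef_inv_mul_transpose (hG : IsUnit G) : (G * Gᵀ)⁻¹.PosDef :=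
  (PosDef.mul_conjTranspose_self G (vecMul_injective_of_isUnit hG)).inv

theorem det_le_det_inv_mul_transpose (hG : IsUnit G) (hL : L.PosSemidef)
    (hcol : ∀ j, G.col j ⬝ᵥ (L *ᵥ G.col j) ≤ 1) : L.det ≤ (G * Gᵀ)⁻¹.det := by
  have hdet : (Gᵀ * L * G).det ≤ 1 :=
    det_le_one_of_diag_le_one (hL.conjTranspose_mul_mul_same G) fun j =>
      (transpose_mul_mul_apply G L j j).trans_le (hcol j)
  have hG0 : G.det ≠ 0 := ((isUnit_iff_isUnit_det G).1 hG).ne_zero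
  calc L.det = (Gᵀ * L * G).det * (G * Gᵀ)⁻¹.det := by
        simp only [det_mul, det_transpose, det_nonsing_inv, Ring.inverse_eq_inv']
        field_simp
    _ ≤ (G * Gᵀ)⁻¹.det :=
        mul_le_of_le_one_left (posDef_inv_mul_transpose hG).det_pos.le hdet

end Optimality

theorem euclNorm_lt_one_iff {n : ℕ} {v : Fin n → ℝ} : euclNorm v < 1 ↔ v ⬝ᵥ v < 1 := by
  rw [euclNorm, Real.sqrt_lt' one_pos]
  simp only [dotProduct, pow_two, one_mul]

theorem stmt3_general {n ι : Type*} [Fintype n] [DecidableEq n] {G : Matrix n n ℝ}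
    (hG : G.rank = Fintype.card n) {K : Matrix n ι ℝ} (hK : ∀ i, K.col i ⬝ᵥ K.col i < 1) :
    IsMVEEOptimal (signedRange G.col ∪ signedRange (G * K).col) (G * Gᵀ)⁻¹ ∧
    (∀ i, (G * K).col i ⬝ᵥ ((G * Gᵀ)⁻¹ *ᵥ (G * K).col i) < 1) ∧
    mveeActivePoints (signedRange G.col ∪ signedRange (G * K).col) (G * Gᵀ)⁻¹ =
      signedRange G.col := by
  have hGu : IsUnit G := isUnit_of_rank_eq_card hG
  have hg (j : n) : G.col j ⬝ᵥ ((G * Gᵀ)⁻¹ *ᵥ G.col j) = 1 := by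
    rw [← transpose_mul_mul_apply, transpose_mul_inv_mul_transpose_mul hGu, one_apply_eq]
  have hb (i : ι) : (G * K).col i ⬝ᵥ ((G * Gᵀ)⁻¹ *ᵥ (G * K).col i) < 1 :=
    (mulVec_dotProduct_inv_mul_transpose_mulVec hGu (K.col i) (K.col i)).trans_lt (hK i)
  have hgS : ∀ p ∈ signedRange G.col, p ⬝ᵥ ((G * Gᵀ)⁻¹ *ᵥ p) = 1 :=
    forall_mem_signedRange_dotProduct_mulVec_iff (P := (· = 1)).2 hg
  have hbS : ∀ p ∈ signedRange (G * K).col, p ⬝ᵥ ((G * Gᵀ)⁻¹ *ᵥ p) < 1 :=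
    forall_mem_signedRange_dotProduct_mulVec_iff (P := (· < 1)).2 hb
  refine ⟨⟨⟨posDef_inv_mul_transpose hGu, ?_⟩, ?_⟩, hb, mveeActivePoints_union_eq_left hgS hbS⟩
  · exact fun p hp => hp.elim (fun hpg => (hgS p hpg).le) fun hpb => (hbS p hpb).le
  · exact fun L hL => det_le_det_inv_mul_transpose hGu hL.1.posSemidef fun j =>
      hL.2 _ (.inl ⟨j, .inl rfl⟩)

/-- Corollary 1 of the paper — with `‖k_i‖₂ < 1` (no nonnegativity),
`L* = (G Gᵀ)⁻¹` is optimal for `Q(S)` and the active points are exactly `{±g_j}`. -/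
theorem stmt3 (r ℓ : ℕ) (G : Matrix (Fin r) (Fin r) ℝ) (hG : G.rank = r)
    (K : Matrix (Fin r) (Fin ℓ) ℝ)
    (hK : ∀ i : Fin ℓ, euclNorm (fun a => K a i) < 1)
    (B : Matrix (Fin r) (Fin ℓ) ℝ) (hB : B = G * K)
    (S : Set (Fin r → ℝ))
    (hS : S = {x | (∃ j : Fin r, x = (fun i => G i j) ∨ x = -(fun i => G i j)) ∨
                   (∃ i : Fin ℓ, x = (fun a => B a i) ∨ x = -(fun a => B a i))})
    (Lstar : Matrix (Fin r) (Fin r) ℝ) (hLstar : Lstar = (G * Gᵀ)⁻¹) :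
    Lstar.PosDef ∧
    (∀ p ∈ S, p ⬝ᵥ (Lstar *ᵥ p) ≤ 1) ∧
    (∀ L : Matrix (Fin r) (Fin r) ℝ, L.PosDef →
      (∀ p ∈ S, p ⬝ᵥ (L *ᵥ p) ≤ 1) → L.det ≤ Lstar.det) ∧
    (∀ i : Fin ℓ, (fun a => B a i) ⬝ᵥ (Lstar *ᵥ fun a => B a i) < 1) ∧
    ({p ∈ S | p ⬝ᵥ (Lstar *ᵥ p) = 1} =
      {x | ∃ j : Fin r, x = (fun i => G i j) ∨ x = -(fun i => G i j)}) := by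
  subst hB hS hLstar
  obtain ⟨⟨hfeas, hmax⟩, hint, hact⟩ :=
    stmt3_general (hG.trans (Fintype.card_fin r).symm) fun i => euclNorm_lt_one_iff.1 (hK i)
  exact ⟨hfeas.1, hfeas.2, fun L hL hLS => hmax L ⟨hL, hLS⟩, hint, hact⟩
end

section
/- Let A = (F, FK)Π ∈ ℝ^{d×m}, where F ∈ ℝ^{d×r} has rank r, K ∈ ℝ^{r×ℓ} (ℓ = m − r) is nonnegative with columns k_1, …, k_ℓ of unit 1-norm, and Π is an m×m permutation matrix. Let N ∈ ℝ^{d×m}, Ã = A + N, let Ã^r be a best rank-r approximation of Ã in the spectral norm, set N̄ = N − (Ã − Ã^r), write N̄Π⁻¹ = (N̄⁽¹⁾, N̄⁽²⁾) with N̄⁽¹⁾ ∈ ℝ^{d×r}, and set F̂ = F + N̄⁽¹⁾. Let σ = σ_min(F) and μ = max_i ‖k_i‖_2. If ‖N‖_2 < σ(1 − μ)/4, then σ_min(F̂) > σ(1 + μ)/2 > 0; in particular, F̂ has rank r. -/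
open Matrix

/-!
Since `A` itself has rank at most `r`, the residual of a best rank-`r` approximation of `A + N` has
norm at most `‖N‖`, so `N̄` has norm at most `2 ‖N‖`. Restricting to some of the columns does not
increase the spectral norm, and `σ_min` is 1-Lipschitz for it, hence
`σ_min(F̂) ≥ σ - 2 ‖N‖ > σ - σ (1 - μ) / 2 = σ (1 + μ) / 2`.
-/

theorem norm_sub_residual_le_two_mul_norm {E : Type*} [SeminormedAddCommGroup E] {S : Set E}
    {a n s : E} (ha : a ∈ S) (hs : IsMinOn (fun b => ‖a + n - b‖) S s) :
    ‖n - (a + n - s)‖ ≤ 2 * ‖n‖ := by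
  have residual_le : ‖a + n - s‖ ≤ ‖n‖ := by
    simpa only [add_sub_cancel_left] using isMinOn_iff.1 hs a ha
  calc ‖n - (a + n - s)‖ ≤ ‖n‖ + ‖a + n - s‖ := norm_sub_le _ _
    _ ≤ 2 * ‖n‖ := by linarith

section ColumnSelection

theorem rank_submatrix_fromCols_mul_le {R d r l m : Type*} [CommSemiring R] [StrongRankCondition R]
    [Fintype r] [Fintype m]
    (F : Matrix d r R) (K : Matrix r l R) (f : m → r ⊕ l) :
    ((fromCols F (F * K)).submatrix id f).rank ≤ F.rank := by
  classical
  have factorization : (fromCols F (F * K)).submatrix id f = F * (fromCols 1 K).submatrix id f :=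
    calc (fromCols F (F * K)).submatrix id f = (F * fromCols 1 K).submatrix id f := by
          rw [mul_fromCols, Matrix.mul_one]
      _ = F * (fromCols 1 K).submatrix id f := submatrix_mul _ _ _ _ _ Function.bijective_id
  rw [factorization]
  exact rank_mul_le_left _ _

open scoped Matrix.Norms.L2Operator

variable {𝕜 m n k : Type*} [RCLike 𝕜] [Fintype m] [Fintype n] [DecidableEq n]
  [Fintype k] [DecidableEq k] {e : k → n}

theorem l2_opNorm_one_submatrix_id_le_one (he : Function.Injective e) :
    ‖(1 : Matrix n n 𝕜).submatrix id e‖ ≤ 1 := by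
  set P := (1 : Matrix n n 𝕜).submatrix id e with hP
  have isometry : Pᴴ * P = 1 := by
    rw [hP, conjTranspose_submatrix, conjTranspose_one, ← submatrix_mul _ _ _ _ _
      Function.bijective_id, Matrix.one_mul, submatrix_one e he]
  have norm_one_le : ‖(1 : Matrix k k 𝕜)‖ ≤ 1 := by
    rw [← diagonal_one, l2_opNorm_diagonal]
    exact (pi_norm_le_iff_of_nonneg zero_le_one).2 fun _ => norm_one.le
  rw [← isometry, l2_opNorm_conjTranspose_mul_self] at norm_one_le
  rwa [← sq_le_one_iff₀ (norm_nonneg P), sq]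

theorem l2_opNorm_submatrix_id_le (M : Matrix m n 𝕜) (he : Function.Injective e) :
    ‖M.submatrix id e‖ ≤ ‖M‖ := by
  have factorization : M.submatrix id e = M * (1 : Matrix n n 𝕜).submatrix id e := by
    simpa only [Matrix.mul_one, submatrix_id_id] using
      submatrix_mul M 1 id id e Function.bijective_id
  calc ‖M.submatrix id e‖ = ‖M * (1 : Matrix n n 𝕜).submatrix id e‖ := by rw [factorization]
    _ ≤ ‖M‖ * ‖(1 : Matrix n n 𝕜).submatrix id e‖ := l2_opNorm_mul _ _
    _ ≤ ‖M‖ := mul_le_of_le_one_right (norm_nonneg _) (l2_opNorm_one_submatrix_id_le_one he)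

end ColumnSelection

section SmallestSingularValue

open scoped Matrix.Norms.L2Operator

variable {d r n : ℕ}

theorem euclNorm_eq_norm_toLp (v : Fin n → ℝ) : euclNorm v = ‖WithLp.toLp 2 v‖ := by
  simp only [euclNorm, EuclideanSpace.norm_eq, Real.norm_eq_abs, sq_abs]

theorem euclNorm_nonneg (v : Fin n → ℝ) : 0 ≤ euclNorm v := Real.sqrt_nonneg _

theorem specNorm_eq_l2_opNorm (M : Matrix (Fin d) (Fin n) ℝ) : specNorm M = ‖M‖ := rfl

theorem euclNorm_mulVec_le (M : Matrix (Fin d) (Fin n) ℝ) (x : Fin n → ℝ) :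
    euclNorm (M *ᵥ x) ≤ specNorm M * euclNorm x := by
  rw [euclNorm_eq_norm_toLp, euclNorm_eq_norm_toLp]
  exact l2_opNorm_mulVec M (WithLp.toLp 2 x)

theorem euclNorm_sub_le_euclNorm_add (v w : Fin n → ℝ) :
    euclNorm v - euclNorm w ≤ euclNorm (v + w) := by
  simpa only [euclNorm_eq_norm_toLp, WithLp.toLp_add] using norm_sub_le_norm_add _ _

theorem sigmaMin_nonneg (M : Matrix (Fin d) (Fin r) ℝ) : 0 ≤ sigmaMin M :=
  Real.sInf_nonneg (Set.forall_mem_image.2 fun _ _ => euclNorm_nonneg _)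

theorem sigmaMin_le (M : Matrix (Fin d) (Fin r) ℝ) {x : Fin r → ℝ} (hx : euclNorm x = 1) :
    sigmaMin M ≤ euclNorm (M *ᵥ x) :=
  csInf_le ⟨0, Set.forall_mem_image.2 fun _ _ => euclNorm_nonneg _⟩ (Set.mem_image_of_mem _ hx)

theorem sigmaMin_mul_euclNorm_le (M : Matrix (Fin d) (Fin r) ℝ) (x : Fin r → ℝ) :
    sigmaMin M * euclNorm x ≤ euclNorm (M *ᵥ x) := by
  obtain hx | hx := (euclNorm_nonneg x).eq_or_lt
  · rw [← hx, mul_zero]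
    exact euclNorm_nonneg _
  have euclNorm_inv_smul {k : ℕ} (v : Fin k → ℝ) :
      euclNorm ((euclNorm x)⁻¹ • v) = (euclNorm x)⁻¹ * euclNorm v := by
    rw [euclNorm_eq_norm_toLp, WithLp.toLp_smul,
      norm_smul_of_nonneg (inv_nonneg.2 hx.le), ← euclNorm_eq_norm_toLp]
  have bound := sigmaMin_le M ((euclNorm_inv_smul x).trans (inv_mul_cancel₀ hx.ne'))
  rwa [mulVec_smul, euclNorm_inv_smul, le_inv_mul_iff₀' hx] at bound

theorem mulVec_injective_of_sigmaMin_pos {M : Matrix (Fin d) (Fin r) ℝ} (hM : 0 < sigmaMin M) :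
    Function.Injective M.mulVec := by
  refine (injective_iff_map_eq_zero M.mulVecLin).2 fun x hx => ?_
  have bound : sigmaMin M * ‖WithLp.toLp 2 x‖ ≤ 0 := by
    simpa only [← mulVecLin_apply, hx, euclNorm_eq_norm_toLp, WithLp.toLp_zero, norm_zero]
      using sigmaMin_mul_euclNorm_le M x
  simpa using nonpos_of_mul_nonpos_right bound hM

theorem rank_eq_of_sigmaMin_pos {M : Matrix (Fin d) (Fin r) ℝ} (hM : 0 < sigmaMin M) :
    M.rank = r := by
  rw [Matrix.rank, LinearMap.finrank_range_of_inj (mulVec_injective_of_sigmaMin_pos hM),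
    Module.finrank_fin_fun]

theorem sigmaMin_sub_specNorm_le_sigmaMin_add (M E : Matrix (Fin d) (Fin r) ℝ) :
    sigmaMin M - specNorm E ≤ sigmaMin (M + E) := by
  obtain hsphere | hsphere := {x : Fin r → ℝ | euclNorm x = 1}.eq_empty_or_nonempty
  · -- This is the case `r = 0`, in which `sInf ∅ = 0`.
    simp only [sigmaMin, hsphere, Set.image_empty, Real.sInf_empty, zero_sub, neg_nonpos]
    exact norm_nonneg _
  refine le_csInf (hsphere.image _) (Set.forall_mem_image.2 fun x hx => ?_)
  have bound : euclNorm (E *ᵥ x) ≤ specNorm E := by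
    simpa only [show euclNorm x = 1 from hx, mul_one] using euclNorm_mulVec_le E x
  calc sigmaMin M - specNorm E ≤ euclNorm (M *ᵥ x) - euclNorm (E *ᵥ x) :=
        sub_le_sub (sigmaMin_le M hx) bound
    _ ≤ euclNorm (M *ᵥ x + E *ᵥ x) := euclNorm_sub_le_euclNorm_add _ _
    _ = euclNorm ((M + E) *ᵥ x) := by rw [add_mulVec]

end SmallestSingularValue

section Perturbation

variable {d m r k : ℕ} {A N Ar : Matrix (Fin d) (Fin m) ℝ} {e : Fin r → Fin m}

open scoped Matrix.Norms.L2Operator in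
theorem specNorm_submatrix_sub_residual_le (hA : A.rank ≤ k)
    (hAr : IsMinOn (fun B => specNorm (A + N - B)) {B | B.rank ≤ k} Ar)
    (he : Function.Injective e) :
    specNorm ((N - (A + N - Ar)).submatrix id e) ≤ 2 * specNorm N := by
  simp only [specNorm_eq_l2_opNorm] at hAr ⊢
  exact (l2_opNorm_submatrix_id_le _ he).trans (norm_sub_residual_le_two_mul_norm hA hAr)

theorem stmt8_general (F : Matrix (Fin d) (Fin r) ℝ) (hA : A.rank ≤ k)
    (hAr : IsMinOn (fun B => specNorm (A + N - B)) {B | B.rank ≤ k} Ar)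
    (he : Function.Injective e) {μ : ℝ} (hμ : 0 ≤ μ)
    (hN : specNorm N < sigmaMin F * (1 - μ) / 4) :
    sigmaMin (F + (N - (A + N - Ar)).submatrix id e) > sigmaMin F * (1 + μ) / 2 ∧
      sigmaMin F * (1 + μ) / 2 > 0 ∧
      (F + (N - (A + N - Ar)).submatrix id e).rank = r := by
  have sigmaMin_pos : 0 < sigmaMin F := by
    refine (sigmaMin_nonneg F).lt_of_ne' fun h => ?_
    rw [h, zero_mul, zero_div] at hN
    exact hN.not_ge (norm_nonneg _)
  have lower_pos : 0 < sigmaMin F * (1 + μ) / 2 := by positivity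
  have lower_lt : sigmaMin F * (1 + μ) / 2 <
      sigmaMin (F + (N - (A + N - Ar)).submatrix id e) := by
    have weyl := sigmaMin_sub_specNorm_le_sigmaMin_add F ((N - (A + N - Ar)).submatrix id e)
    have noise_le := specNorm_submatrix_sub_residual_le hA hAr he
    linarith
  exact ⟨lower_lt, lower_pos, rank_eq_of_sigmaMin_pos (lower_pos.trans lower_lt)⟩

end Perturbation

/-- Lemma 3-a of the paper — if `‖N‖₂ < σ(1 − μ)/4` then
`σ_min(F̂) > σ(1 + μ)/2 > 0`, so `F̂` has rank `r`. -/
theorem stmt8 (d m r ℓ : ℕ)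
    (F : Matrix (Fin d) (Fin r) ℝ) (hF : F.rank = r)
    (K : Matrix (Fin r) (Fin ℓ) ℝ) (hKpos : ∀ a i, 0 ≤ K a i)
    (hK1 : ∀ i : Fin ℓ, oneNorm (fun a => K a i) = 1)
    (π : Fin m ≃ (Fin r ⊕ Fin ℓ))
    (A : Matrix (Fin d) (Fin m) ℝ)
    (hA : ∀ i j, A i j = Sum.elim (fun a => F i a) (fun b => (F * K) i b) (π j))
    (N : Matrix (Fin d) (Fin m) ℝ)
    (Ar : Matrix (Fin d) (Fin m) ℝ) (hAr_rank : Ar.rank ≤ r)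
    (hAr_best : ∀ B : Matrix (Fin d) (Fin m) ℝ, B.rank ≤ r →
      specNorm (A + N - Ar) ≤ specNorm (A + N - B))
    (Nbar : Matrix (Fin d) (Fin m) ℝ) (hNbar : Nbar = N - (A + N - Ar))
    (N1 : Matrix (Fin d) (Fin r) ℝ) (hN1 : ∀ i a, N1 i a = Nbar i (π.symm (Sum.inl a)))
    (Fhat : Matrix (Fin d) (Fin r) ℝ) (hFhat : Fhat = F + N1)
    (σ μ : ℝ) (hσ : σ = sigmaMin F) (hμ : μ = ⨆ i : Fin ℓ, euclNorm (fun a => K a i))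
    (hN : specNorm N < σ * (1 - μ) / 4) :
    sigmaMin Fhat > σ * (1 + μ) / 2 ∧ σ * (1 + μ) / 2 > 0 ∧ Fhat.rank = r := by
  obtain rfl : A = (fromCols F (F * K)).submatrix id π := Matrix.ext hA
  obtain rfl : N1 = Nbar.submatrix id (π.symm ∘ Sum.inl) := Matrix.ext hN1
  subst hNbar hFhat hσ hμ
  exact stmt8_general F ((rank_submatrix_fromCols_mul_le F K π).trans hF.le)
    (isMinOn_iff.2 hAr_best) (π.symm.injective.comp Sum.inl_injective)
    (Real.iSup_nonneg fun _ => euclNorm_nonneg _) hN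
end

section
/- Let p_1, …, p_m ∈ ℝ^ρ and suppose the matrix P = (p_1, …, p_m) ∈ ℝ^{ρ×m} has rank ρ. Let S = {±p_1, …, ±p_m} and let L* be an optimal solution of the origin-centered MVEE problem Q(S). Then Q(S) has at least ρ active points, i.e., the set {i ∈ {1, …, m} : p_iᵀ L* p_i = 1} has cardinality at least ρ. -/
open Matrix

/-!
If the active points did not span the whole space, some `w ≠ 0` would be orthogonal to all of them.
Replacing the optimal `L` by `L + t • w wᵀ` leaves the value at every active point equal to `1` and,
for small `t > 0`, keeps the finitely many other values below `1`. By the matrix determinant lemma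
the determinant is multiplied by `1 + t * wᵀ L⁻¹ w > 1`, contradicting optimality.
-/

theorem exists_ne_zero_forall_dotProduct_eq_zero {K n : Type*} [Field K] [Fintype n]
    {s : Set (n → K)} (hs : Submodule.span K s ≠ ⊤) :
    ∃ w : n → K, w ≠ 0 ∧ ∀ v ∈ s, v ⬝ᵥ w = 0 := by
  classical
  obtain ⟨f, hf, hsf⟩ := Submodule.exists_le_ker_of_lt_top _ hs.lt_top
  obtain ⟨w, rfl⟩ := (dotProductEquiv K n).surjective f
  refine ⟨w, by rintro rfl; simp at hf, fun v hv => ?_⟩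
  rw [dotProduct_comm]
  exact hsf (Submodule.subset_span hv)

theorem finrank_le_ncard_of_span_image_eq_top {R M ι : Type*} [Semiring R] [StrongRankCondition R]
    [AddCommMonoid M] [Module R M] {v : ι → M} {s : Set ι} (hs : s.Finite)
    (hspan : Submodule.span R (v '' s) = ⊤) : Module.finrank R M ≤ s.ncard := by
  have := hs.fintype
  rw [Set.image_eq_range] at hspan
  rw [← Nat.card_coe_set_eq, Nat.card_eq_fintype_card]
  exact finrank_le_of_span_eq_top hspan

theorem exists_pos_forall_add_mul_le {ι : Type*} [Finite ι] {a b : ι → ℝ} {c : ℝ}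
    (hac : ∀ i, a i ≤ c) (hb : ∀ i, a i = c → b i ≤ 0) :
    ∃ t : ℝ, 0 < t ∧ ∀ i, a i + t * b i ≤ c := by
  suffices h : ∀ᶠ t : ℝ in nhdsWithin 0 (Set.Ioi 0), ∀ i, a i + t * b i ≤ c from
    (eventually_mem_nhdsWithin.and h).exists
  refine Filter.eventually_all.2 fun i => ?_
  rcases (hac i).eq_or_lt with heq | hlt
  · filter_upwards [self_mem_nhdsWithin] with t ht
    linarith [mul_nonpos_of_nonneg_of_nonpos (Set.mem_Ioi.1 ht).le (hb i heq)]
  · have hcont : Continuous fun t : ℝ => a i + t * b i := by fun_prop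
    have hnear : ∀ᶠ t in nhds (0 : ℝ), a i + t * b i < c :=
      hcont.continuousAt.eventually_lt_const (by simpa using hlt)
    exact (hnear.filter_mono nhdsWithin_le_nhds).mono fun _ => le_of_lt

section RankOneUpdate

variable {n R : Type*} [Fintype n] [CommRing R]

theorem dotProduct_add_smul_vecMulVec_self_mulVec (A : Matrix n n R) (t : R) (v w : n → R) :
    v ⬝ᵥ (A + t • vecMulVec w w) *ᵥ v = v ⬝ᵥ A *ᵥ v + t * (v ⬝ᵥ w) ^ 2 := by
  simp only [add_mulVec, smul_mulVec, vecMulVec_mulVec, dotProduct_add, dotProduct_smul,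
    op_smul_eq_smul, smul_eq_mul, dotProduct_comm w v, sq]

theorem det_add_vecMulVec [DecidableEq n] {A : Matrix n n R} (hA : IsUnit A.det) (u v : n → R) :
    (A + vecMulVec u v).det = A.det * (1 + v ⬝ᵥ A⁻¹ *ᵥ u) := by
  rw [vecMulVec_eq Unit, det_add_replicateCol_mul_replicateRow hA, Matrix.mul_assoc,
    ← replicateCol_mulVec, det_unique (n := Unit), Matrix.add_apply, one_apply_eq,
    replicateRow_mul_replicateCol_apply]

theorem det_lt_det_add_smul_vecMulVec_self [DecidableEq n] {L : Matrix n n ℝ} (hL : L.PosDef)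
    {t : ℝ} (ht : 0 < t) {w : n → ℝ} (hw : w ≠ 0) :
    L.det < (L + t • vecMulVec w w).det := by
  have hquad : 0 < w ⬝ᵥ L⁻¹ *ᵥ w := by simpa using hL.inv.dotProduct_mulVec_pos hw
  rw [← smul_vecMulVec, det_add_vecMulVec hL.det_pos.ne'.isUnit, mulVec_smul, dotProduct_smul,
    smul_eq_mul]
  exact lt_mul_of_one_lt_right hL.det_pos (lt_add_of_pos_right 1 (mul_pos ht hquad))

end RankOneUpdate

theorem posDef_add_smul_vecMulVec_self {n : Type*} [Finite n] {L : Matrix n n ℝ} (hL : L.PosDef)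
    {t : ℝ} (ht : 0 ≤ t) (w : n → ℝ) : (L + t • vecMulVec w w).PosDef := by
  have hw : (vecMulVec w w).PosSemidef := by simpa using posSemidef_vecMulVec_self_star w
  exact hL.add_posSemidef (hw.smul ht)

section MVEE

variable {ι n : Type*} [Fintype n]

/-- The feasible set of the origin-centered MVEE problem for the points `± p i`. The signs do not
appear because the constraint is even in the point. -/
def mveeFeasible (p : ι → n → ℝ) : Set (Matrix n n ℝ) :=
  {L | L.PosDef ∧ ∀ i, p i ⬝ᵥ L *ᵥ p i ≤ 1}

/-- The indices of the active points, those on the boundary of the ellipsoid `xᵀ L x ≤ 1`. Indices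
are used rather than points, so repeated points count separately. -/
def mveeActive (p : ι → n → ℝ) (L : Matrix n n ℝ) : Set ι :=
  {i | p i ⬝ᵥ L *ᵥ p i = 1}

theorem exists_pos_add_smul_vecMulVec_self_mem_mveeFeasible [Finite ι] {p : ι → n → ℝ}
    {L : Matrix n n ℝ} (hL : L ∈ mveeFeasible p) {w : n → ℝ}
    (hw : ∀ i ∈ mveeActive p L, p i ⬝ᵥ w = 0) :
    ∃ t : ℝ, 0 < t ∧ L + t • vecMulVec w w ∈ mveeFeasible p := by
  obtain ⟨hpos, hle⟩ := hL
  obtain ⟨t, ht, hle_t⟩ := exists_pos_forall_add_mul_le (b := fun i => (p i ⬝ᵥ w) ^ 2) hle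
    fun i hi => by simp [hw i hi]
  exact ⟨t, ht, posDef_add_smul_vecMulVec_self hpos ht.le w, fun i =>
    (dotProduct_add_smul_vecMulVec_self_mulVec L t (p i) w).trans_le (hle_t i)⟩

theorem stmt12_general [Finite ι] [DecidableEq n] {p : ι → n → ℝ} {L : Matrix n n ℝ}
    (hL : L ∈ mveeFeasible p) (hmax : IsMaxOn det (mveeFeasible p) L) :
    Submodule.span ℝ (p '' mveeActive p L) = ⊤ := by
  by_contra hspan
  obtain ⟨w, hw, hw_orth⟩ := exists_ne_zero_forall_dotProduct_eq_zero hspan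
  obtain ⟨t, ht, hfeas⟩ := exists_pos_add_smul_vecMulVec_self_mem_mveeFeasible hL
    fun i hi => hw_orth (p i) (Set.mem_image_of_mem p hi)
  exact (det_lt_det_add_smul_vecMulVec_self hL.1 ht hw).not_ge (hmax hfeas)

end MVEE

/-- Lemma 4 of the paper — if `P = (p_1, …, p_m)` has rank `ρ`, then
`Q(S)` has at least `ρ` active points. -/
theorem stmt12 (ρ m : ℕ) (p : Fin m → (Fin ρ → ℝ))
    (P : Matrix (Fin ρ) (Fin m) ℝ) (hP : P = Matrix.of fun i j => p j i)
    (hrank : P.rank = ρ)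
    (Lstar : Matrix (Fin ρ) (Fin ρ) ℝ) (hPD : Lstar.PosDef)
    (hfeas : ∀ i : Fin m, p i ⬝ᵥ (Lstar *ᵥ p i) ≤ 1)
    (hopt : ∀ L : Matrix (Fin ρ) (Fin ρ) ℝ, L.PosDef →
      (∀ i : Fin m, p i ⬝ᵥ (L *ᵥ p i) ≤ 1) → L.det ≤ Lstar.det) :
    ρ ≤ Set.ncard {i : Fin m | p i ⬝ᵥ (Lstar *ᵥ p i) = 1} := by
  have hspan := stmt12_general ⟨hPD, hfeas⟩ fun L hL => hopt L hL.1 hL.2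
  exact (Module.finrank_fin_fun ℝ).ge.trans
    (finrank_le_ncard_of_span_image_eq_top (Set.toFinite _) hspan)
end
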